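/- Let P be a Beta(k, M-k+1) random variable, δ ∈ (2/3, 1), p_k = √6/k^{δ/2}, and let E_β = ((k-1)/M)^β·(P^{-β} - E[P^{-β}]) for a real β with 0 < β < k/q for a positive integer q. Then on the event {(1-p_k)(k-1)/M < P < (1+p_k)(k-1)/M}, |E_β| = O(k^{-δ/2}) deterministically, and E[E_β^q] = O(k^{-δq/2}) + O(e^{-3k^{1-δ}}). -/

import Mathlib

open MeasureTheory Filter Asymptotics

theorem h_pow_bound {β : ℝ} (hβ : 0 < β) (b : ℕ) (hb : β + 1 ≤ b) {t : ℝ} (ht : 0 < t) :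
    |t ^ (-β) - 1| ≤ β * |t - 1| * (1 + (t⁻¹) ^ b) := by
  have hti : 0 < t⁻¹ := inv_pos.mpr ht
  have hpb : 0 < (t⁻¹) ^ b := pow_pos hti b
  rcases le_total 1 t with h | h
  · have h1 : t ^ (-β) ≤ 1 := Real.rpow_le_one_of_one_le_of_nonpos h (by linarith)
    have h2 : 1 - β * (t - 1) ≤ t ^ (-β) := by
      rw [Real.rpow_def_of_pos ht]
      have := Real.add_one_le_exp (Real.log t * -β)
      have h3 := Real.log_le_sub_one_of_pos ht
      nlinarith
    rw [abs_of_nonpos (by linarith), abs_of_nonneg (by linarith : 0 ≤ t - 1)]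
    have : 0 ≤ β * (t - 1) * (t⁻¹) ^ b := by
      have : 0 ≤ t - 1 := by linarith
      positivity
    nlinarith
  · have h1 : 1 ≤ t ^ (-β) := Real.one_le_rpow_of_pos_of_le_one_of_nonpos ht h (by linarith)
    have h2 : 1 - β * (t⁻¹ - 1) ≤ t ^ β := by
      rw [Real.rpow_def_of_pos ht]
      have := Real.add_one_le_exp (Real.log t * β)
      have h3 := Real.log_le_sub_one_of_pos hti
      rw [Real.log_inv] at h3
      nlinarith
    have h3 : t ^ (-β) * t ^ β = 1 := by
      rw [← Real.rpow_add ht]; simp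
    have h4 : t ^ (-β) * t⁻¹ ≤ (t⁻¹) ^ b := by
      have : t ^ (-β) * t⁻¹ = (t⁻¹) ^ (β + 1) := by
        rw [Real.rpow_add hti, Real.rpow_one, Real.inv_rpow ht.le, Real.rpow_neg ht.le]
      rw [this, ← Real.rpow_natCast]
      exact Real.rpow_le_rpow_of_exponent_le (one_le_inv_iff₀.mpr ⟨ht, h⟩) hb
    rw [abs_of_nonneg (by linarith), abs_of_nonpos (by linarith : t - 1 ≤ 0)]
    have h5 : t⁻¹ - 1 = (1 - t) * t⁻¹ := by field_simp
    have h6 : 0 < t ^ (-β) := by linarith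
    calc t ^ (-β) - 1 = t ^ (-β) - t ^ (-β) * t ^ β := by rw [h3]
      _ ≤ t ^ (-β) * (β * (t⁻¹ - 1)) := by nlinarith
      _ = β * (1 - t) * (t ^ (-β) * t⁻¹) := by rw [h5]; ring
      _ ≤ β * (1 - t) * ((t⁻¹) ^ b) := by
        apply mul_le_mul_of_nonneg_left h4
        have : 0 ≤ 1 - t := by linarith
        positivity
      _ ≤ _ := by
        have : 0 ≤ β * (1 - t) := mul_nonneg hβ.le (by linarith)
        nlinarith

theorem h_gamma_ratio {β y : ℝ} (hβ : 0 < β) (hy : 0 < y - β - 1) :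
    (y - β - 1) ^ β ≤ Real.Gamma y / Real.Gamma (y - β) ∧
      Real.Gamma y / Real.Gamma (y - β) ≤ y ^ β := by
  have hc := Real.convexOn_log_Gamma
  have hy0 : 0 < y := by linarith
  have hyb : 0 < y - β := by linarith
  have g0 := Real.Gamma_pos_of_pos hy0
  have g1 := Real.Gamma_pos_of_pos hyb
  have g2 := Real.Gamma_pos_of_pos hy
  have e1 : Real.log (Real.Gamma (y + 1)) = Real.log y + Real.log (Real.Gamma y) := by
    rw [Real.Gamma_add_one hy0.ne', Real.log_mul hy0.ne' g0.ne']
  have e2 : Real.log (Real.Gamma (y - β)) =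
      Real.log (y - β - 1) + Real.log (Real.Gamma (y - β - 1)) := by
    rw [← Real.log_mul hy.ne' g2.ne', ← Real.Gamma_add_one hy.ne']; congr 2; ring
  have s1 := hc.slope_mono_adjacent (x := y - β) (y := y) (z := y + 1) hyb
    (show 0 < y + 1 by linarith) (by linarith) (by linarith)
  have s2 := hc.slope_mono_adjacent (x := y - β - 1) (y := y - β) (z := y) hy
    hy0 (by linarith) (by linarith)
  simp only [Function.comp] at s1 s2
  have t1 : y - (y - β) = β := by ring
  have t2 : y + 1 - y = 1 := by ring
  have t3 : y - β - (y - β - 1) = 1 := by ring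
  rw [t1, t2, e1, div_one, div_le_iff₀ hβ] at s1
  rw [t1, t3, e2, div_one, le_div_iff₀ hβ, ← e2] at s2
  have hl : Real.Gamma y / Real.Gamma (y - β) =
      Real.exp (Real.log (Real.Gamma y) - Real.log (Real.Gamma (y - β))) := by
    rw [Real.exp_sub, Real.exp_log g0, Real.exp_log g1]
  rw [hl, Real.rpow_def_of_pos hy, Real.rpow_def_of_pos hy0, Real.exp_le_exp, Real.exp_le_exp]
  have e3 : Real.log (Real.Gamma (y - β)) - Real.log (Real.Gamma (y - β - 1)) =
      Real.log (y - β - 1) := by linarith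
  rw [e3] at s2
  constructor <;> linarith

theorem h_gamma_main {β k M : ℝ} (hβ : 0 < β) (b : ℕ) (hb : β + 1 ≤ b)
    (hk : 8 * (1 + β) ≤ k) (hkM : k ≤ M) :
    |((k - 1) / M) ^ β * (Real.Gamma (k - β) * Real.Gamma (M + 1) /
        (Real.Gamma k * Real.Gamma (M + 1 - β))) - 1| ≤ 4 * (1 + β) * β * (1 + 2 ^ b) / k := by
  obtain ⟨a1, a2⟩ := h_gamma_ratio (y := k) hβ (by linarith)
  obtain ⟨b1, b2⟩ := h_gamma_ratio (y := M + 1) hβ (by linarith)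
  have k0 : 0 < k := by linarith
  have k1 : 0 < k - 1 := by linarith
  have M0 : 0 < M := by linarith
  have Mb : 0 < M - β := by linarith
  have kb : 0 < k - β - 1 := by linarith
  have g0 := Real.Gamma_pos_of_pos k0
  have g1 := Real.Gamma_pos_of_pos (show 0 < k - β by linarith)
  have g2 := Real.Gamma_pos_of_pos (show 0 < M + 1 by linarith)
  have g3 := Real.Gamma_pos_of_pos (show 0 < M + 1 - β by linarith)
  have est : ∀ t : ℝ, |t - 1| ≤ 4 * (1 + β) / k →
      |t ^ (-β) - 1| ≤ 4 * (1 + β) * β * (1 + 2 ^ b) / k := by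
    intro t ht
    have h1 : 4 * (1 + β) / k ≤ 1 / 2 := by rw [div_le_iff₀ k0]; linarith
    have h2 : 1 / 2 ≤ t := by have := (abs_le.mp (ht.trans h1)).1; linarith
    have ht0 : 0 < t := by linarith
    have h3 : t⁻¹ ≤ 2 := by rw [inv_le_comm₀ ht0 two_pos]; linarith
    have h4 : (t⁻¹) ^ b ≤ 2 ^ b := pow_le_pow_left₀ (inv_pos.mpr ht0).le h3 b
    calc _ ≤ β * |t - 1| * (1 + (t⁻¹) ^ b) := h_pow_bound hβ b hb ht0
      _ ≤ β * (4 * (1 + β) / k) * (1 + 2 ^ b) := by gcongr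
      _ = _ := by ring
  set R1 := Real.Gamma k / Real.Gamma (k - β) with hR1
  set R2 := Real.Gamma (M + 1) / Real.Gamma (M + 1 - β) with hR2
  have R1p : 0 < R1 := by positivity
  have hm : Real.Gamma (k - β) * Real.Gamma (M + 1) /
        (Real.Gamma k * Real.Gamma (M + 1 - β)) = R2 / R1 := by
    rw [hR1, hR2]; field_simp
  rw [hm]
  have lo : (k / (k - 1) * (M / (M - β))) ^ (-β) ≤ ((k - 1) / M) ^ β * (R2 / R1) := by
    have : (k / (k - 1) * (M / (M - β))) ^ (-β) = ((k - 1) / M) ^ β * ((M + 1 - β - 1) ^ β / k ^ β) := by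
      rw [← Real.div_rpow (by linarith) k0.le, ← Real.mul_rpow (by positivity)
        (div_nonneg (by linarith) k0.le), Real.rpow_neg (by positivity), ← Real.inv_rpow (by positivity)]
      congr 1
      field_simp
      ring
    rw [this]
    gcongr
  have hi : ((k - 1) / M) ^ β * (R2 / R1) ≤ ((k - β - 1) / (k - 1) * (M / (M + 1))) ^ (-β) := by
    have : ((k - β - 1) / (k - 1) * (M / (M + 1))) ^ (-β) = ((k - 1) / M) ^ β * ((M + 1) ^ β / (k - β - 1) ^ β) := by
      rw [← Real.div_rpow (by linarith) kb.le, ← Real.mul_rpow (by positivity)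
        (by positivity), Real.rpow_neg (by positivity), ← Real.inv_rpow (by positivity)]
      congr 1
      field_simp
    rw [this]
    gcongr
  have e1 := est (k / (k - 1) * (M / (M - β))) (by
    have : k / (k - 1) * (M / (M - β)) - 1 = (M + β * (k - 1)) / ((k - 1) * (M - β)) := by
      field_simp; ring
    rw [this, abs_of_nonneg (by positivity), div_le_div_iff₀ (by positivity) k0]
    have h1 : k / 2 ≤ k - 1 := by linarith
    have h2 : M / 2 ≤ M - β := by linarith
    have h3 : k / 2 * (M / 2) ≤ (k - 1) * (M - β) := by gcongr
    have h4 : 4 * (1 + β) * (k / 2 * (M / 2)) ≤ 4 * (1 + β) * ((k - 1) * (M - β)) := by gcongr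
    have h5 : β * (k - 1) * k ≤ β * M * k := by gcongr; linarith
    nlinarith)
  have e2 := est ((k - β - 1) / (k - 1) * (M / (M + 1))) (by
    have : (k - β - 1) / (k - 1) * (M / (M + 1)) - 1 = -((k - 1 + β * M) / ((k - 1) * (M + 1))) := by
      field_simp; ring
    rw [this, abs_neg, abs_of_nonneg (by positivity), div_le_div_iff₀ (by positivity) k0]
    have h1 : k / 2 ≤ k - 1 := by linarith
    have h3 : k / 2 * M ≤ (k - 1) * (M + 1) := by gcongr; linarith
    have h4 : 4 * (1 + β) * (k / 2 * M) ≤ 4 * (1 + β) * ((k - 1) * (M + 1)) := by gcongr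
    have h5 : (k - 1) * k ≤ M * k := by gcongr; linarith
    have h6 : 0 < β * M * k := by positivity
    have h7 : 0 < M * k := by positivity
    nlinarith)
  rw [abs_le] at *
  constructor <;> linarith [e1.1, e2.2]

noncomputable def bI (a b : ℕ) : ℝ := ∫ p in (0:ℝ)..1, p ^ a * (1 - p) ^ b

theorem bI_nonneg (a b : ℕ) : 0 ≤ bI a b := by
  apply intervalIntegral.integral_nonneg zero_le_one
  intro p hp
  have : 0 ≤ 1 - p := by linarith [hp.2]
  have := hp.1
  positivity

theorem bI_ftc (a b : ℕ) : ((a:ℝ) + 1) * bI a (b + 1) = (b + 1) * bI (a + 1) b := by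
  have h : ∀ p : ℝ, HasDerivAt (fun p : ℝ => p ^ (a + 1) * (1 - p) ^ (b + 1))
      (((a:ℝ) + 1) * (p ^ a * (1 - p) ^ (b + 1)) - (b + 1) * (p ^ (a + 1) * (1 - p) ^ b)) p := by
    intro p
    have h1 := hasDerivAt_pow (a + 1) p
    have h2 := ((hasDerivAt_id p).const_sub 1).pow (b + 1)
    refine (h1.mul h2).congr_deriv ?_
    simp; ring
  have := intervalIntegral.integral_eq_sub_of_hasDerivAt (a := 0) (b := 1) (fun p _ => h p)
    (Continuous.intervalIntegrable (by fun_prop) _ _)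
  rw [intervalIntegral.integral_sub (Continuous.intervalIntegrable (by fun_prop) _ _)
    (Continuous.intervalIntegrable (by fun_prop) _ _), intervalIntegral.integral_const_mul,
    intervalIntegral.integral_const_mul] at this
  simp at this
  unfold bI
  linarith

theorem bI_split (a b : ℕ) : bI a (b + 1) = bI a b - bI (a + 1) b := by
  unfold bI
  rw [← intervalIntegral.integral_sub (Continuous.intervalIntegrable (by fun_prop) _ _)
    (Continuous.intervalIntegrable (by fun_prop) _ _)]
  congr 1; ext p; ring

theorem bI_rec (a b : ℕ) : ((a:ℝ) + 1) * bI a b = (a + b + 2) * bI (a + 1) b := by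
  have := bI_ftc a b
  rw [bI_split] at this
  linarith

theorem bI_fact (b : ℕ) : ∀ a : ℕ, bI a b * ((a + b + 1).factorial : ℝ) = a.factorial * b.factorial := by
  induction b with
  | zero =>
    intro a
    simp only [bI, pow_zero, mul_one, integral_pow, Nat.factorial_succ, add_zero, Nat.factorial_zero]
    push_cast
    have : (a:ℝ) + 1 ≠ 0 := by positivity
    field_simp
    simp
  | succ b ih =>
    intro a
    have h := ih (a + 1)
    have h2 := bI_ftc a b
    have e : a + 1 + b + 1 = a + (b + 1) + 1 := by ring
    rw [e] at h
    rw [Nat.factorial_succ a] at h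
    rw [Nat.factorial_succ b]
    push_cast at *
    have : (a:ℝ) + 1 ≠ 0 := by positivity
    apply mul_left_cancel₀ this
    linear_combination ((a + (b + 1) + 1).factorial : ℝ) * h2 + ((b:ℝ) + 1) * h

theorem bI_neg (b c : ℕ) : ∀ a : ℕ, bI a b * ((a:ℝ) + 1) ^ c ≤ ((a:ℝ) + b + c + 1) ^ c * bI (a + c) b := by
  induction c with
  | zero => intro a; simp
  | succ c ih =>
    intro a
    have h := ih (a + 1)
    have h2 := bI_rec a b
    have n1 := bI_nonneg (a + 1) b
    have n2 := bI_nonneg (a + 1 + c) b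
    have e : a + 1 + c = a + (c + 1) := by ring
    push_cast at *
    calc bI a b * ((a:ℝ) + 1) ^ (c + 1) = (((a:ℝ) + 1) * bI a b) * ((a:ℝ) + 1) ^ c := by ring
      _ = ((a:ℝ) + b + 2) * (bI (a + 1) b * ((a:ℝ) + 1) ^ c) := by rw [h2]; ring
      _ ≤ ((a:ℝ) + b + 2) * (bI (a + 1) b * ((a:ℝ) + 1 + 1) ^ c) := by gcongr; linarith
      _ ≤ ((a:ℝ) + b + 2) * (((a:ℝ) + 1 + b + c + 1) ^ c * bI (a + 1 + c) b) := by gcongr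
      _ ≤ ((a:ℝ) + b + (c + 1) + 1) * (((a:ℝ) + 1 + b + c + 1) ^ c * bI (a + 1 + c) b) := by
        gcongr ?_ * _
        have : (0:ℝ) ≤ c := by positivity
        linarith
      _ = _ := by rw [e]; ring

noncomputable def bV (a b r : ℕ) : ℝ :=
  ∫ p in (0:ℝ)..1, (p / ((a:ℝ) / (a + b + 1)) - 1) ^ r * (p ^ a * (1 - p) ^ b)

theorem bV_nonneg (a b r : ℕ) : 0 ≤ bV a b (2 * r) := by
  apply intervalIntegral.integral_nonneg zero_le_one
  intro p hp
  have h1 : 0 ≤ 1 - p := by linarith [hp.2]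
  have h2 := hp.1
  rw [pow_mul]
  positivity

theorem bV_rec (a b r : ℕ) (ha : 1 ≤ a) :
    ((a:ℝ) - r - 1) * bV a b (2 * r + 2) ≤ (3 * r + 2) * bV a b (2 * r) := by
  have ha' : (1:ℝ) ≤ a := by exact_mod_cast ha
  obtain ⟨x, hx⟩ : ∃ x, x = (a:ℝ) / (a + b + 1) := ⟨_, rfl⟩
  have hx0 : 0 < x := by rw [hx]; positivity
  have hx1 : x ≤ 1 := by
    rw [hx, div_le_one (by positivity)]
    have : (0:ℝ) ≤ b := by positivity
    linarith
  have hxe : ((a:ℝ) + b + 1) * x = a := by rw [hx]; field_simp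
  have h : ∀ p : ℝ, HasDerivAt (fun p : ℝ => p ^ (a + 1) * (1 - p) ^ (b + 1) * (p / x - 1) ^ (2 * r + 1))
      ((p ^ a * (1 - p) ^ b) * ((1 - x) * (p / x - 1) ^ (2 * r + 1) - (a + x) * (p / x - 1) ^ (2 * r + 2)
        + (p / x) * (1 - p) * (2 * r + 1) * (p / x - 1) ^ (2 * r))) p := by
    intro p
    have h1 := hasDerivAt_pow (a + 1) p
    have h2 := ((hasDerivAt_id p).const_sub 1).pow (b + 1)
    have h3 := (((hasDerivAt_id p).div_const x).sub_const 1).pow (2 * r + 1)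
    refine ((h1.mul h2).mul h3).congr_deriv ?_
    simp
    obtain ⟨v, hv⟩ : ∃ v, v = p / x - 1 := ⟨_, rfl⟩
    have hp : p = x * (1 + v) := by rw [hv]; field_simp; ring
    rw [← hv]
    have hpx : p / x = 1 + v := by rw [hv]; ring
    rw [hpx]
    have key : (1 - x) * v - (a + x) * v ^ 2 = ((a + 1) * (1 - p) - (b + 1) * p) * v := by
      rw [hp]; linear_combination (v + v ^ 2) * hxe
    have hx' : p * x⁻¹ = 1 + v := by rw [← hpx]; rfl
    linear_combination -(p ^ a * (1 - p) ^ b) * v ^ (2 * r) * key + (p ^ a * (1 - p) ^ b) * v ^ (2 * r) * (1 - p) * (2 * r + 1) * hx'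
  have h0 := intervalIntegral.integral_eq_sub_of_hasDerivAt (a := 0) (b := 1) (fun p _ => h p)
    (Continuous.intervalIntegrable (by fun_prop) _ _)
  simp at h0
  have hle : ∫ p in (0:ℝ)..1, ((p ^ a * (1 - p) ^ b) * ((1 - x) * (p / x - 1) ^ (2 * r + 1) - (a + x) * (p / x - 1) ^ (2 * r + 2)
        + (p / x) * (1 - p) * (2 * r + 1) * (p / x - 1) ^ (2 * r))) ≤
      ∫ p in (0:ℝ)..1, ((3 * r + 2) * ((p / x - 1) ^ (2 * r) * (p ^ a * (1 - p) ^ b)) -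
        ((a:ℝ) - r - 1) * ((p / x - 1) ^ (2 * r + 2) * (p ^ a * (1 - p) ^ b))) := by
    apply intervalIntegral.integral_mono_on zero_le_one
      (Continuous.intervalIntegrable (by fun_prop) _ _)
      (Continuous.intervalIntegrable (by fun_prop) _ _)
    intro p hp
    have hp0 := hp.1
    have hp1 : 0 ≤ 1 - p := by linarith [hp.2]
    have hw : 0 ≤ p ^ a * (1 - p) ^ b := by positivity
    have hpx : 0 ≤ p / x := by positivity
    obtain ⟨v, hv⟩ : ∃ v, v = p / x - 1 := ⟨_, rfl⟩
    rw [← hv]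
    have hpx' : p / x = 1 + v := by rw [hv]; ring
    rw [hpx'] at hpx ⊢
    have hs : 0 ≤ v ^ (2 * r) := by rw [pow_mul]; positivity
    have i1 : (1 - x) * v ≤ (1 + v ^ 2) / 2 := by nlinarith [sq_nonneg (v - 1), sq_nonneg v]
    have i2 : (1 + v) * (1 - p) ≤ 1 + (1 + v ^ 2) / 2 := by nlinarith [sq_nonneg (v - 1)]
    have i3 : (1 + v) * (1 - p) * (2 * r + 1) ≤ (1 + (1 + v ^ 2) / 2) * (2 * r + 1) := by gcongr
    have i4 : (1 - x) * v - (a + x) * v ^ 2 + (1 + v) * (1 - p) * (2 * r + 1) ≤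
        (3 * r + 2) - ((a:ℝ) - r - 1) * v ^ 2 := by nlinarith [sq_nonneg v, mul_nonneg hx0.le (sq_nonneg v)]
    have i5 := mul_le_mul_of_nonneg_left i4 (mul_nonneg hw hs)
    have l1 : p ^ a * (1 - p) ^ b * v ^ (2 * r) * ((1 - x) * v - (a + x) * v ^ 2 + (1 + v) * (1 - p) * (2 * r + 1))
      = p ^ a * (1 - p) ^ b * ((1 - x) * v ^ (2 * r + 1) - (a + x) * v ^ (2 * r + 2) + (1 + v) * (1 - p) * (2 * r + 1) * v ^ (2 * r)) := by ring
    have l2 : p ^ a * (1 - p) ^ b * v ^ (2 * r) * (3 * r + 2 - (a - r - 1) * v ^ 2) =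
      (3 * r + 2) * (v ^ (2 * r) * (p ^ a * (1 - p) ^ b)) - (a - r - 1) * (v ^ (2 * r + 2) * (p ^ a * (1 - p) ^ b)) := by ring
    rw [l1, l2] at i5
    exact i5
  rw [intervalIntegral.integral_sub (Continuous.intervalIntegrable (by fun_prop) _ _)
    (Continuous.intervalIntegrable (by fun_prop) _ _), intervalIntegral.integral_const_mul,
    intervalIntegral.integral_const_mul] at hle
  rw [h0] at hle
  unfold bV
  rw [← hx]
  linarith

theorem bV_bound (r : ℕ) : ∃ C : ℝ, 0 < C ∧ ∀ a b : ℕ, 2 * (r + 1) ≤ a →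
    bV a b (2 * r) * (a:ℝ) ^ r ≤ C * bI a b := by
  induction r with
  | zero => exact ⟨1, one_pos, fun a b _ => by simp [bV, bI]⟩
  | succ r ih =>
    obtain ⟨C, hC, h⟩ := ih
    refine ⟨2 * (3 * r + 2) * C, by positivity, fun a b hab => ?_⟩
    have h1 := h a b (by omega)
    have h2 := bV_rec a b r (by omega)
    have h3 := bV_nonneg a b (r + 1)
    have hab' : 2 * ((r:ℝ) + 1 + 1) ≤ a := by exact_mod_cast hab
    rw [show 2 * (r + 1) = 2 * r + 2 by ring] at *
    have h4 : (a:ℝ) / 2 * bV a b (2 * r + 2) ≤ (a - r - 1) * bV a b (2 * r + 2) := by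
      gcongr; linarith
    calc bV a b (2 * r + 2) * (a:ℝ) ^ (r + 1) = 2 * ((a:ℝ) / 2 * bV a b (2 * r + 2)) * (a:ℝ) ^ r := by ring
      _ ≤ 2 * ((3 * r + 2) * bV a b (2 * r)) * (a:ℝ) ^ r := by
        gcongr 2 * ?_ * _
        exact h4.trans h2
      _ = 2 * (3 * r + 2) * (bV a b (2 * r) * (a:ℝ) ^ r) := by ring
      _ ≤ 2 * (3 * r + 2) * (C * bI a b) := by gcongr
      _ = _ := by ring

theorem h_add_pow (q : ℕ) {u v : ℝ} (hu : 0 ≤ u) (hv : 0 ≤ v) :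
    (u + v) ^ q ≤ 2 ^ q * (u ^ q + v ^ q) := by
  have h1 : 0 ≤ u ^ q := by positivity
  have h2 : 0 ≤ v ^ q := by positivity
  rcases le_total u v with h | h
  · calc (u + v) ^ q ≤ (2 * v) ^ q := by gcongr; linarith
      _ = 2 ^ q * v ^ q := mul_pow _ _ _
      _ ≤ _ := by gcongr; linarith
  · calc (u + v) ^ q ≤ (2 * u) ^ q := by gcongr; linarith
      _ = 2 ^ q * u ^ q := mul_pow _ _ _
      _ ≤ _ := by gcongr; linarith

theorem h_E_bound {β x p μ D : ℝ} (hβ : 0 < β) (B : ℕ) (hb : β + 1 ≤ B) (hx : 0 < x) (hp : 0 < p)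
    (hm : |x ^ β * μ - 1| ≤ D) :
    |x ^ β * (p ^ (-β) - μ)| ≤ β * |p / x - 1| * (1 + ((p / x)⁻¹) ^ B) + D := by
  have h1 := h_pow_bound hβ B hb (div_pos hp hx)
  have h2 : x ^ β * (p ^ (-β) - μ) = ((p / x) ^ (-β) - 1) - (x ^ β * μ - 1) := by
    rw [Real.div_rpow hp.le hx.le, Real.rpow_neg hx.le]
    field_simp
    ring
  rw [h2]
  exact (abs_sub _ _).trans (add_le_add h1 hm)

set_option maxHeartbeats 2000000 in
theorem h_moment {β D : ℝ} (hβ : 0 < β) (hD : 0 ≤ D) (B : ℕ) (hb : β + 1 ≤ B) (q : ℕ) :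
    ∃ C : ℝ, 0 < C ∧ ∀ a b : ℕ, 2 * (q + 1) + 2 * (2 * B * q) ≤ a → ∀ N μ : ℝ, 0 ≤ N →
      N * bI a b = 1 → |((a:ℝ) / (a + b + 1)) ^ β * μ - 1| ≤ D / (a + 1) →
      ‖∫ p in Set.Ioo (0:ℝ) 1, (((a:ℝ) / (a + b + 1)) ^ β * (p ^ (-β) - μ)) ^ q *
        (p ^ a * (1 - p) ^ b * N)‖ ≤ C * ((Real.sqrt (a + 1)) ^ q)⁻¹ := by
  obtain ⟨C1, hC1, hV⟩ := bV_bound q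
  obtain ⟨c, hc⟩ : ∃ c, c = 2 * B * q := ⟨_, rfl⟩
  obtain ⟨A, hA⟩ : ∃ A : ℝ, A = 4 ^ q * β ^ q + 2 ^ q * D ^ q := ⟨_, rfl⟩
  have hA0 : 0 < A := by rw [hA]; positivity
  refine ⟨A * (C1 * 2 ^ q + 2 + 2 ^ c), by positivity, ?_⟩
  intro a b hab N μ hN0 hN hμ
  rw [← hc] at hab
  have ha : (1:ℝ) ≤ a := by exact_mod_cast (by omega : 1 ≤ a)
  have hbV : bV a b (2 * q) * (a:ℝ) ^ q ≤ C1 * bI a b := hV a b (by omega)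
  have hbVe : bV a b (2 * q) = ∫ p in (0:ℝ)..1, (p / ((a:ℝ) / (a + b + 1)) - 1) ^ (2 * q) * (p ^ a * (1 - p) ^ b) := rfl
  obtain ⟨x, hx⟩ : ∃ x, x = (a:ℝ) / (a + b + 1) := ⟨_, rfl⟩
  have hx0 : 0 < x := by rw [hx]; positivity
  have hxe : x * ((a:ℝ) + b + 1) = a := by rw [hx]; field_simp
  rw [← hx] at hμ hbVe ⊢
  obtain ⟨L, hL⟩ : ∃ L, L = Real.sqrt ((a:ℝ) + 1) := ⟨_, rfl⟩
  have hL2 : L ^ 2 = a + 1 := by rw [hL]; exact Real.sq_sqrt (by positivity)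
  have hL1 : 1 ≤ L := by rw [hL]; exact Real.one_le_sqrt.mpr (by linarith)
  rw [← hL]
  obtain ⟨s, hs⟩ : ∃ s, s = L ^ q := ⟨_, rfl⟩
  have hs0 : 0 < s := by rw [hs]; positivity
  have hs2 : s ^ 2 = ((a:ℝ) + 1) ^ q := by rw [hs, ← hL2]; ring
  have hDs : (D / (a + 1)) ^ q ≤ D ^ q * s⁻¹ := by
    rw [div_pow, div_eq_mul_inv, hs]
    gcongr
    rw [← hL2]; nlinarith
  rw [← hs]
  have hca : c ≤ a := by omega
  have pt : ∀ p ∈ Set.Ioo (0:ℝ) 1, ‖(x ^ β * (p ^ (-β) - μ)) ^ q * (p ^ a * (1 - p) ^ b * N)‖ ≤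
      A * N * (s * ((p / x - 1) ^ (2 * q) * (p ^ a * (1 - p) ^ b)) + 2 * s⁻¹ * (p ^ a * (1 - p) ^ b)
        + s⁻¹ * x ^ c * (p ^ (a - c) * (1 - p) ^ b)) := by
    intro p hp
    have hp0 := hp.1
    have hp1 : 0 < 1 - p := by linarith [hp.2]
    have e1 := h_E_bound hβ B hb hx0 hp0 hμ
    obtain ⟨v, hv⟩ : ∃ v, v = p / x - 1 := ⟨_, rfl⟩
    obtain ⟨W, hW⟩ : ∃ W, W = (p / x)⁻¹ := ⟨_, rfl⟩
    have hW0 : 0 < W := by rw [hW]; positivity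
    have hWp : W ^ c * p ^ a = x ^ c * p ^ (a - c) := by
      have : p ^ a = p ^ (a - c) * p ^ c := by rw [← pow_add]; congr 1; omega
      rw [this, hW, inv_div, div_pow]; field_simp
    rw [← hv, ← hW] at e1
    rw [← hv]
    have hE : |x ^ β * (p ^ (-β) - μ)| ^ q ≤ A * (s * v ^ (2 * q) + s⁻¹ * (2 + W ^ c)) := by
      have hDa : 0 ≤ D / ((a:ℝ) + 1) := by positivity
      have f1 : |v| ^ q * (1 + W ^ (B * q)) ≤ s * v ^ (2 * q) + s⁻¹ * (1 + W ^ c) := by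
        have g1 : v ^ (2 * q) = (|v| ^ q) ^ 2 := by
          rw [← pow_mul, mul_comm q 2, pow_mul, pow_mul, sq_abs]
        have g2 : W ^ c = (W ^ (B * q)) ^ 2 := by rw [← pow_mul, hc]; congr 1; ring
        rw [g1, g2]
        generalize |v| ^ q = y
        generalize W ^ (B * q) = z
        have g3 : s * y ^ 2 + s⁻¹ * (1 + z ^ 2) - y * (1 + z) =
          s⁻¹ * ((s * y - (1 + z) / 2) ^ 2 + (3 / 4) + 3 / 4 * z ^ 2 - z / 2) := by
          field_simp; ring
        have g4 : 0 ≤ s⁻¹ * ((s * y - (1 + z) / 2) ^ 2 + (3 / 4) + 3 / 4 * z ^ 2 - z / 2) := by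
          apply mul_nonneg (by positivity)
          nlinarith [sq_nonneg (s * y - (1 + z) / 2), sq_nonneg (z - 1), sq_nonneg z]
        linarith
      have f2 : 0 ≤ s * v ^ (2 * q) := by rw [pow_mul]; positivity
      have f3 : 0 ≤ s⁻¹ := by positivity
      have f4 : 0 ≤ s⁻¹ * W ^ c := by positivity
      calc |x ^ β * (p ^ (-β) - μ)| ^ q ≤ (β * |v| * (1 + W ^ B) + D / (a + 1)) ^ q := by gcongr
        _ ≤ 2 ^ q * ((β * |v| * (1 + W ^ B)) ^ q + (D / (a + 1)) ^ q) :=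
          h_add_pow q (by positivity) hDa
        _ ≤ 2 ^ q * (β ^ q * |v| ^ q * (2 ^ q * (1 ^ q + (W ^ B) ^ q)) + D ^ q * s⁻¹) := by
          rw [mul_pow, mul_pow]
          gcongr
          exact h_add_pow q zero_le_one (by positivity)
        _ = 4 ^ q * β ^ q * (|v| ^ q * (1 + W ^ (B * q))) + 2 ^ q * D ^ q * s⁻¹ := by
          rw [one_pow, ← pow_mul, show (4:ℝ) = 2 * 2 by norm_num, mul_pow]; ring
        _ ≤ 4 ^ q * β ^ q * (s * v ^ (2 * q) + s⁻¹ * (2 + W ^ c)) +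
            2 ^ q * D ^ q * (s * v ^ (2 * q) + s⁻¹ * (2 + W ^ c)) := by
          gcongr
          · linarith
          · linarith
        _ = _ := by rw [hA]; ring
    rw [norm_mul, norm_pow, Real.norm_eq_abs, Real.norm_of_nonneg (by positivity)]
    calc _ ≤ A * (s * v ^ (2 * q) + s⁻¹ * (2 + W ^ c)) * (p ^ a * (1 - p) ^ b * N) := by gcongr
      _ = _ := by linear_combination A * N * s⁻¹ * (1 - p) ^ b * hWp
  have hcont : Continuous (fun p : ℝ => A * N * (s * ((p / x - 1) ^ (2 * q) * (p ^ a * (1 - p) ^ b)) + 2 * s⁻¹ * (p ^ a * (1 - p) ^ b)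
        + s⁻¹ * x ^ c * (p ^ (a - c) * (1 - p) ^ b))) := by fun_prop
  have hGint : IntegrableOn (fun p : ℝ => A * N * (s * ((p / x - 1) ^ (2 * q) * (p ^ a * (1 - p) ^ b)) + 2 * s⁻¹ * (p ^ a * (1 - p) ^ b)
        + s⁻¹ * x ^ c * (p ^ (a - c) * (1 - p) ^ b))) (Set.Ioo 0 1) :=
    (hcont.integrableOn_Icc (a := 0) (b := 1)).mono_set Set.Ioo_subset_Icc_self
  refine (norm_integral_le_of_norm_le hGint
    ((ae_restrict_iff' measurableSet_Ioo).mpr (Eventually.of_forall pt))).trans ?_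
  rw [← integral_Ioc_eq_integral_Ioo, ← intervalIntegral.integral_of_le zero_le_one,
    intervalIntegral.integral_const_mul,
    intervalIntegral.integral_add (Continuous.intervalIntegrable (by fun_prop) _ _)
      (Continuous.intervalIntegrable (by fun_prop) _ _),
    intervalIntegral.integral_add (Continuous.intervalIntegrable (by fun_prop) _ _)
      (Continuous.intervalIntegrable (by fun_prop) _ _),
    intervalIntegral.integral_const_mul, intervalIntegral.integral_const_mul,
    intervalIntegral.integral_const_mul, ← hbVe]
  change A * N * (s * bV a b (2 * q) + 2 * s⁻¹ * bI a b + s⁻¹ * x ^ c * bI (a - c) b) ≤ _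
  have hI0 := bI_nonneg a b
  have hbV0 := bV_nonneg a b q
  have i1 : s * bV a b (2 * q) ≤ s⁻¹ * (C1 * 2 ^ q) * bI a b := by
    have : s * bV a b (2 * q) = s⁻¹ * (bV a b (2 * q) * s ^ 2) := by field_simp
    rw [this, hs2]
    calc s⁻¹ * (bV a b (2 * q) * ((a:ℝ) + 1) ^ q) ≤ s⁻¹ * (bV a b (2 * q) * (2 * (a:ℝ)) ^ q) := by
          gcongr; linarith
      _ = s⁻¹ * 2 ^ q * (bV a b (2 * q) * (a:ℝ) ^ q) := by rw [mul_pow]; ring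
      _ ≤ s⁻¹ * 2 ^ q * (C1 * bI a b) := by gcongr
      _ = _ := by ring
  have i2 : x ^ c * bI (a - c) b ≤ 2 ^ c * bI a b := by
    obtain ⟨d, rfl⟩ : ∃ d, a = d + c := ⟨a - c, by omega⟩
    have h := bI_neg b c d
    rw [Nat.add_sub_cancel]
    have hn := bI_nonneg d b
    have hd : ((d + c : ℕ) : ℝ) ≤ 2 * ((d:ℝ) + 1) := by exact_mod_cast (by omega : d + c ≤ 2 * (d + 1))
    have hpos : 0 < ((d:ℝ) + b + c + 1) ^ c := by positivity
    have hxe' : x * ((d:ℝ) + b + c + 1) = ((d + c : ℕ) : ℝ) := by rw [← hxe]; push_cast; ring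
    refine le_of_mul_le_mul_right ?_ hpos
    calc x ^ c * bI d b * ((d:ℝ) + b + c + 1) ^ c = ((d + c : ℕ) : ℝ) ^ c * bI d b := by
          rw [← hxe', mul_pow]; ring
      _ ≤ (2 * ((d:ℝ) + 1)) ^ c * bI d b := by gcongr
      _ = 2 ^ c * (bI d b * ((d:ℝ) + 1) ^ c) := by rw [mul_pow]; ring
      _ ≤ 2 ^ c * (((d:ℝ) + b + c + 1) ^ c * bI (d + c) b) := by gcongr
      _ = _ := by ring
  calc _ ≤ A * N * (s⁻¹ * (C1 * 2 ^ q) * bI a b + 2 * s⁻¹ * bI a b + s⁻¹ * (2 ^ c * bI a b)) := by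
        rw [mul_assoc s⁻¹ (x ^ c)]
        gcongr
    _ = A * (C1 * 2 ^ q + 2 + 2 ^ c) * s⁻¹ * (N * bI a b) := by ring
    _ = _ := by rw [hN, mul_one]

theorem stmt17 (δ : ℝ) (hδ : δ ∈ Set.Ioo (2/3 : ℝ) 1)
    (k M : ℕ → ℕ) (hkM : ∀ n, k n ≤ M n) (hk3 : ∀ n, 3 ≤ k n)
    (hk : Tendsto (fun n => (k n : ℝ)) atTop atTop)
    (β : ℝ) (hβ : 0 < β) (q : ℕ) (hq : 0 < q) (hqβ : ∀ n, (q : ℝ) * β < k n) :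
    let m : ℕ → ℝ := fun n =>
      Real.Gamma ((k n : ℝ) - β) * Real.Gamma ((M n : ℝ) + 1) /
        (Real.Gamma ((k n : ℝ)) * Real.Gamma ((M n : ℝ) + 1 - β))
    let Eβ : ℕ → ℝ → ℝ := fun n p => (((k n : ℝ) - 1) / M n) ^ β * (p ^ (-β) - m n)
    let pk : ℕ → ℝ := fun n => Real.sqrt 6 / (k n : ℝ) ^ (δ / 2)
    let pdf : ℕ → ℝ → ℝ := fun n p =>
      p ^ (k n - 1) * (1 - p) ^ (M n - k n) *
        (Real.Gamma ((M n : ℝ) + 1) /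
          (Real.Gamma ((k n : ℝ)) * Real.Gamma ((M n : ℝ) - k n + 1)))
    (∃ C : ℝ, 0 < C ∧ ∀ᶠ n in atTop, ∀ p : ℝ,
        (1 - pk n) * ((k n : ℝ) - 1) / M n < p → p < (1 + pk n) * ((k n : ℝ) - 1) / M n →
        |Eβ n p| ≤ C * (k n : ℝ) ^ (-δ / 2)) ∧
    (fun n => ∫ p in Set.Ioo (0:ℝ) 1, (Eβ n p) ^ q * pdf n p)
      =O[atTop]
        (fun n => (k n : ℝ) ^ (-δ * q / 2) + Real.exp (-3 * (k n : ℝ) ^ (1 - δ))) := by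
  intro m Eβ pk pdf
  obtain ⟨hδ1, hδ2⟩ := hδ
  obtain ⟨B, hB⟩ := exists_nat_ge (β + 1)
  obtain ⟨D, hD⟩ : ∃ D : ℝ, D = 4 * (1 + β) * β * (1 + 2 ^ B) := ⟨_, rfl⟩
  have hD0 : 0 < D := by rw [hD]; positivity
  have hm : ∀ᶠ n in atTop, |(((k n : ℝ) - 1) / M n) ^ β * m n - 1| ≤ D / k n := by
    filter_upwards [hk.eventually_ge_atTop (8 * (1 + β))] with n hn
    rw [hD]
    exact h_gamma_main hβ B hB hn (by exact_mod_cast hkM n)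
  constructor
  · refine ⟨β * Real.sqrt 6 * (1 + 2 ^ B) + D, by positivity, ?_⟩
    have hpk : ∀ᶠ n in atTop, pk n ≤ 1 / 2 := by
      have h1 : Tendsto (fun n => (k n : ℝ) ^ (δ / 2)) atTop atTop :=
        (tendsto_rpow_atTop (by linarith)).comp hk
      have h2 : Tendsto pk atTop (nhds 0) := h1.const_div_atTop _
      exact h2.eventually_le_const (by norm_num)
    filter_upwards [hm, hpk] with n hn hpn p hp1 hp2
    have hk0 : (3:ℝ) ≤ k n := by exact_mod_cast hk3 n
    have hM0 : (0:ℝ) < M n := by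
      have : (k n : ℝ) ≤ M n := by exact_mod_cast hkM n
      linarith
    obtain ⟨x, hx⟩ : ∃ x, x = ((k n : ℝ) - 1) / M n := ⟨_, rfl⟩
    have hx0 : 0 < x := by rw [hx]; apply div_pos _ hM0; linarith
    rw [mul_div_assoc, ← hx] at hp1 hp2
    rw [← hx] at hn
    have ht1 : 1 - pk n < p / x := by rwa [lt_div_iff₀ hx0]
    have ht2 : p / x < 1 + pk n := by rwa [div_lt_iff₀ hx0]
    have hp0 : 0 < p := by
      have : 0 < p / x := by linarith
      rwa [div_pos_iff_of_pos_right hx0] at this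
    have h1 := h_E_bound hβ B hB hx0 hp0 hn
    have h2 : |p / x - 1| ≤ pk n := by rw [abs_le]; constructor <;> linarith
    have h3 : (p / x)⁻¹ ≤ 2 := by rw [inv_le_comm₀ (by positivity) two_pos]; linarith
    have h4 : ((p / x)⁻¹) ^ B ≤ 2 ^ B := pow_le_pow_left₀ (by positivity) h3 B
    have h5 : pk n = Real.sqrt 6 * (k n : ℝ) ^ (-δ / 2) := by
      simp only [pk]
      rw [neg_div, Real.rpow_neg (by linarith)]; rfl
    have h6 : D / k n ≤ D * (k n : ℝ) ^ (-δ / 2) := by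
      rw [div_eq_mul_inv, ← Real.rpow_neg_one]
      gcongr <;> linarith
    have hE : Eβ n p = x ^ β * (p ^ (-β) - m n) := by rw [hx]
    rw [hE]
    have hpk0 : 0 ≤ pk n := by positivity
    calc _ ≤ _ := h1
      _ ≤ β * pk n * (1 + 2 ^ B) + D * (k n : ℝ) ^ (-δ / 2) := by gcongr
      _ = _ := by rw [h5]; ring
  · obtain ⟨C, hC, hmom⟩ := h_moment hβ hD0.le B hB q
    refine IsBigO.of_bound C ?_
    filter_upwards [hm, hk.eventually_ge_atTop ((2 * (q + 1) + 2 * (2 * B * q) + 1 : ℕ) : ℝ)] with n hn hkn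
    have hkn' : 2 * (q + 1) + 2 * (2 * B * q) + 1 ≤ k n := by exact_mod_cast hkn
    obtain ⟨a, ha⟩ : ∃ a, k n = a + 1 := ⟨k n - 1, by omega⟩
    obtain ⟨b, hb⟩ : ∃ b, M n = a + b + 1 := ⟨M n - k n, by have := hkM n; omega⟩
    have ea : (k n : ℝ) = a + 1 := by rw [ha]; push_cast; ring
    have eb : (M n : ℝ) = a + b + 1 := by rw [hb]; push_cast; ring
    have ea1 : (k n : ℝ) - 1 = a := by rw [ea]; ring
    have g1 : Real.Gamma ((M n : ℝ) + 1) = ((a + b + 1).factorial : ℝ) := by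
      rw [hb]; exact Real.Gamma_nat_eq_factorial _
    have g2 : Real.Gamma (k n : ℝ) = (a.factorial : ℝ) := by
      rw [ea]; exact Real.Gamma_nat_eq_factorial _
    have g3 : Real.Gamma ((M n : ℝ) - k n + 1) = (b.factorial : ℝ) := by
      rw [← Real.Gamma_nat_eq_factorial, ea, eb]; congr 1; ring
    have hf := bI_fact b a
    have f1 : (0:ℝ) < a.factorial := by exact_mod_cast a.factorial_pos
    have f2 : (0:ℝ) < b.factorial := by exact_mod_cast b.factorial_pos
    have key := hmom a b (by omega)
      (((a + b + 1).factorial : ℝ) / (a.factorial * b.factorial)) (m n) (by positivity)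
      (by rw [div_mul_eq_mul_div, mul_comm, hf]; field_simp)
      (by rw [ea1, eb, ea] at hn; exact hn)
    have hEq : (∫ p in Set.Ioo (0:ℝ) 1, (Eβ n p) ^ q * pdf n p) =
        ∫ p in Set.Ioo (0:ℝ) 1, (((a:ℝ) / (a + b + 1)) ^ β * (p ^ (-β) - m n)) ^ q *
        (p ^ a * (1 - p) ^ b * (((a + b + 1).factorial : ℝ) / (a.factorial * b.factorial))) := by
      simp only [Eβ, pdf]
      rw [g1, g2, g3, ea1, eb, show k n - 1 = a by omega, show M n - k n = b by omega]
    rw [hEq]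
    refine key.trans ?_
    have k1 : (1:ℝ) ≤ k n := by rw [ea]; have : (0:ℝ) ≤ a := by positivity
                                linarith
    have hr : ((Real.sqrt ((a:ℝ) + 1)) ^ q)⁻¹ = (k n : ℝ) ^ (-(q:ℝ) / 2) := by
      rw [← ea, Real.sqrt_eq_rpow, ← Real.rpow_natCast, ← Real.rpow_mul (by linarith),
        ← Real.rpow_neg (by linarith)]
      congr 1; ring
    rw [hr]
    have he := Real.exp_pos (-3 * (k n : ℝ) ^ (1 - δ))
    have hpos : 0 < (k n : ℝ) ^ (-δ * q / 2) := Real.rpow_pos_of_pos (by linarith) _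
    rw [Real.norm_of_nonneg (by linarith)]
    gcongr
    have : (k n : ℝ) ^ (-(q:ℝ) / 2) ≤ (k n : ℝ) ^ (-δ * q / 2) := by
      apply Real.rpow_le_rpow_of_exponent_le k1
      have : (0:ℝ) ≤ q := by positivity
      nlinarith
    linarith
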